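/- arXiv:2111.11917 — 2 statements merged into one kernel-verified Lean document; each statement's English description precedes it below -/
import Mathlib

section
/- Let A, V, q, M be as in the context. Then there exists a constant C > 0 such that for all x, y, ξ, η ∈ ℝⁿ: if |x−y| ≤ C^{-1}·M(x,ξ)^{1/(2κ)} and |ξ−η| ≤ C^{-1}·M(x,ξ)^{1/(2γ)}, then M(x,ξ) ≤ C·M(y,η), i.e. (q+V(x)+A(ξ))/(q+V(y)+A(η)) ≤ C. -/
open MeasureTheory RealInnerProductSpace
noncomputable section

/-- ℝⁿ with the Euclidean norm. -/
abbrev E (n : ℕ) : Type := EuclideanSpace ℝ (Fin n)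

/-- A continuous `Γ : ℝⁿ → ℝ` is a τ-function (with parameter q). -/
def IsTauFunction {n : ℕ} (τ q : ℝ) (Γ : E n → ℝ) : Prop :=
  Continuous Γ ∧ (∀ x, 0 < Γ x + q / 4) ∧
  ∃ C₁ > (0:ℝ), ∃ R > (0:ℝ), ∀ x y : E n, R ≤ ‖x‖ → R ≤ ‖y‖ →
    C₁ * |(q / 2 + Γ x) ^ (1 / (2 * τ)) - (q / 2 + Γ y) ^ (1 / (2 * τ))| ≤ ‖x - y‖

/-- The Hörmander metric g^{(A,V)}: g_{(x,ξ)}(t,τ′) = |t|²M^{-1/κ} + |τ′|²M^{-1/γ},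
where M(x,ξ) = q + V(x) + A(ξ). -/
def gMet {n : ℕ} (κ γ q : ℝ) (A V : E n → ℝ) (X T : E n × E n) : ℝ :=
  ‖T.1‖ ^ 2 * (q + V X.1 + A X.2) ^ (-(1 / κ)) +
    ‖T.2‖ ^ 2 * (q + V X.1 + A X.2) ^ (-(1 / γ))

/-- The dual form g^σ_{(x,ξ)}(t,τ′) = |t|²M^{1/γ} + |τ′|²M^{1/κ}. -/
def gSig {n : ℕ} (κ γ q : ℝ) (A V : E n → ℝ) (X T : E n × E n) : ℝ :=
  ‖T.1‖ ^ 2 * (q + V X.1 + A X.2) ^ (1 / γ) +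
    ‖T.2‖ ^ 2 * (q + V X.1 + A X.2) ^ (1 / κ)

/-!
Write `M(x, ξ) = F x + G ξ` with `F = q / 2 + V` and `G = q / 2 + A`, both bounded below by `q / 4`.
The power `F ^ (1 / (2κ))` is Lipschitz outside a ball and bounded on it, so it is Lipschitz up to
an additive error. Since `F` is bounded away from zero, that error is absorbed and `F` drops by at
most a constant factor over distances `≤ ε F ^ (1 / (2κ))`; the same holds for `G`. Finally
`M(x, ξ)` is at most twice the larger of `F x` and `G ξ`, and only that summand has to be followed
from `(x, ξ)` to `(y, η)`.
-/

open Bornology Metric Set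
open scoped NNReal

theorem le_rpow_inv_mul_of_rpow_le_mul_rpow {a b D s : ℝ} (ha : 0 ≤ a) (hb : 0 ≤ b) (hD : 0 ≤ D)
    (hs : 0 < s) (h : a ^ s ≤ D * b ^ s) : a ≤ D ^ s⁻¹ * b := by
  rw [← Real.rpow_le_rpow_iff ha (by positivity) hs, Real.mul_rpow (by positivity) hb,
    Real.rpow_inv_rpow hD hs.ne']
  exact h

section MetricSpace

variable {X Y : Type*} [PseudoMetricSpace X] [PseudoMetricSpace Y]

/-- A map that is Lipschitz up to an additive error. This is what remains of a Lipschitz condition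
imposed only outside a bounded set. -/
def IsCoarselyLipschitz (f : X → Y) : Prop :=
  ∃ K B : ℝ≥0, ∀ x y, dist (f x) (f y) ≤ K * dist x y + B

/-- Slow variation, in the sense of Hörmander, of a positive weight `F` with respect to the length
scale `F ^ s`. Only the upper bound on `F x / F y` is required, written without division. -/
def IsSlowlyVarying (s : ℝ) (F : X → ℝ) : Prop :=
  ∃ ε > 0, ∃ C > 0, ∀ x y, dist x y ≤ ε * F x ^ s → F x ≤ C * F y

theorem IsCoarselyLipschitz.of_isBounded_range {f : X → Y} (hf : IsBounded (range f)) :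
    IsCoarselyLipschitz f := by
  obtain ⟨B, hB⟩ := isBounded_range_iff.1 hf
  refine ⟨0, B.toNNReal, fun x y ↦ ?_⟩
  simpa only [NNReal.coe_zero, zero_mul, zero_add] using (hB x y).trans B.le_coe_toNNReal

theorem IsCoarselyLipschitz.of_lipschitzOnWith_compl {f : X → Y} {K : ℝ≥0} {S : Set X}
    (hS : IsBounded S) (hfS : IsBounded (f '' S)) (hf : LipschitzOnWith K f Sᶜ) :
    IsCoarselyLipschitz f := by
  rcases Sᶜ.eq_empty_or_nonempty with hempty | ⟨z, hz⟩
  · rw [compl_empty_iff.1 hempty, image_univ] at hfS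
    exact .of_isBounded_range hfS
  obtain ⟨R, hR, hSR⟩ := hS.subset_closedBall_lt 0 z
  obtain ⟨T, hT, hST⟩ := hfS.subset_closedBall_lt 0 (f z)
  have exists_compl_near (x : X) : ∃ x' ∈ Sᶜ, dist x x' ≤ R ∧ dist (f x) (f x') ≤ T := by
    by_cases hx : x ∈ S
    · exact ⟨z, hz, hSR hx, hST (mem_image_of_mem f hx)⟩
    · exact ⟨x, hx, by simpa using hR.le, by simpa using hT.le⟩
  lift R to ℝ≥0 using hR.le
  lift T to ℝ≥0 using hT.le
  refine ⟨K, K * (2 * R) + 2 * T, fun x y ↦ ?_⟩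
  obtain ⟨x', hx', hxx', hfx⟩ := exists_compl_near x
  obtain ⟨y', hy', hyy', hfy⟩ := exists_compl_near y
  have hdist : dist x' y' ≤ dist x y + 2 * R := by
    linarith [dist_triangle4 x' x y y', dist_comm x x']
  calc dist (f x) (f y)
      ≤ dist (f x) (f x') + dist (f x') (f y') + dist (f y') (f y) := dist_triangle4 ..
    _ ≤ T + K * (dist x y + 2 * R) + T := by
      gcongr
      · exact (hf.dist_le_mul x' hx' y' hy').trans (by gcongr)
      · rwa [dist_comm]
    _ = K * dist x y + ↑(K * (2 * R) + 2 * T) := by push_cast; ring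

theorem IsCoarselyLipschitz.of_continuous_of_lipschitzOnWith_compl [ProperSpace X] {f : X → Y}
    {K : ℝ≥0} {S : Set X} (hf : Continuous f) (hS : IsBounded S) (hfS : LipschitzOnWith K f Sᶜ) :
    IsCoarselyLipschitz f :=
  .of_lipschitzOnWith_compl hS
    ((hS.isCompact_closure.image hf).isBounded.subset (image_mono subset_closure)) hfS

theorem IsCoarselyLipschitz.isSlowlyVarying {F : X → ℝ} {s δ : ℝ} (hs : 0 < s) (hδ : 0 < δ)
    (hF : ∀ x, δ ≤ F x) (h : IsCoarselyLipschitz fun x ↦ F x ^ s) : IsSlowlyVarying s F := by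
  obtain ⟨K, B, hKB⟩ := h
  have hF₀ (x : X) : 0 ≤ F x := hδ.le.trans (hF x)
  refine ⟨(2 * (K + 1))⁻¹, by positivity, (2 + 2 * (B / δ ^ s)) ^ s⁻¹, by positivity,
    fun x y hxy ↦ le_rpow_inv_mul_of_rpow_le_mul_rpow (hF₀ x) (hF₀ y) (by positivity) hs ?_⟩
  have hmain : K * dist x y ≤ F x ^ s / 2 := by
    calc K * dist x y ≤ (K + 1) * ((2 * ((K : ℝ) + 1))⁻¹ * F x ^ s) := by gcongr; linarith
      _ = F x ^ s / 2 := by field_simp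
  have herror : B ≤ B / δ ^ s * F y ^ s := by
    calc (B : ℝ) = B / δ ^ s * δ ^ s := by field_simp
      _ ≤ B / δ ^ s * F y ^ s := by gcongr; exact hF y
  have hdiff : F x ^ s - F y ^ s ≤ K * dist x y + B := (le_abs_self _).trans (hKB x y)
  linarith

-- `M` is the value of a larger weight, of which `F x` is the dominant summand.
theorem IsSlowlyVarying.exists_forall_ge_le_mul {F : X → ℝ} {s : ℝ} (hs : 0 ≤ s)
    (hF : ∀ x, 0 ≤ F x) (h : IsSlowlyVarying s F) :
    ∃ C₀ > 0, ∀ C ≥ C₀, ∀ (x y : X) (M : ℝ), 0 ≤ M → M ≤ 2 * F x →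
      dist x y ≤ C⁻¹ * M ^ s → M ≤ C * F y := by
  obtain ⟨ε, hε, C₁, hC₁, hslow⟩ := h
  refine ⟨max (2 ^ s / ε) (2 * C₁), by positivity, fun C hC x y M hM hMx hxy ↦ ?_⟩
  obtain ⟨hCε, hCC₁⟩ := max_le_iff.1 hC
  have hC₀ : 0 < C := by linarith
  have hscale : C⁻¹ * M ^ s ≤ ε * F x ^ s := by
    calc C⁻¹ * M ^ s ≤ C⁻¹ * (2 * F x) ^ s := by gcongr
      _ = C⁻¹ * 2 ^ s * F x ^ s := by rw [Real.mul_rpow zero_le_two (hF x), mul_assoc]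
      _ ≤ ε * F x ^ s := by
        have := Real.rpow_nonneg (hF x) s
        gcongr
        rwa [inv_mul_le_iff₀ hC₀, ← div_le_iff₀ hε]
  calc M ≤ 2 * F x := hMx
    _ ≤ 2 * (C₁ * F y) := by gcongr; exact hslow x y (hxy.trans hscale)
    _ = 2 * C₁ * F y := by ring
    _ ≤ C * F y := by gcongr; exact hF y

theorem IsSlowlyVarying.exists_add_le_mul_add {F : X → ℝ} {G : Y → ℝ} {s t : ℝ}
    (hs : 0 ≤ s) (ht : 0 ≤ t) (hF₀ : ∀ x, 0 ≤ F x) (hG₀ : ∀ ξ, 0 ≤ G ξ)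
    (hF : IsSlowlyVarying s F) (hG : IsSlowlyVarying t G) :
    ∃ C > 0, ∀ (x y : X) (ξ η : Y), dist x y ≤ C⁻¹ * (F x + G ξ) ^ s →
      dist ξ η ≤ C⁻¹ * (F x + G ξ) ^ t → F x + G ξ ≤ C * (F y + G η) := by
  obtain ⟨C₁, hC₁, hF_le⟩ := hF.exists_forall_ge_le_mul hs hF₀
  obtain ⟨C₂, -, hG_le⟩ := hG.exists_forall_ge_le_mul ht hG₀
  refine ⟨max C₁ C₂, by positivity, fun x y ξ η hxy hξη ↦ ?_⟩
  have hM : 0 ≤ F x + G ξ := add_nonneg (hF₀ x) (hG₀ ξ)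
  rcases le_total (G ξ) (F x) with hGF | hFG
  · calc F x + G ξ ≤ max C₁ C₂ * F y :=
        hF_le _ (le_max_left ..) x y _ hM (by linarith) hxy
      _ ≤ max C₁ C₂ * (F y + G η) := by gcongr; exact le_add_of_nonneg_right (hG₀ η)
  · calc F x + G ξ ≤ max C₁ C₂ * G η :=
        hG_le _ (le_max_right ..) ξ η _ hM (by linarith) hξη
      _ ≤ max C₁ C₂ * (F y + G η) := by gcongr; exact le_add_of_nonneg_left (hF₀ y)

end MetricSpace

namespace IsTauFunction

variable {n : ℕ} {τ q : ℝ} {Γ : E n → ℝ}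

theorem quarter_le_half_add (h : IsTauFunction τ q Γ) (x : E n) : q / 4 ≤ q / 2 + Γ x := by
  linarith [h.2.1 x]

theorem isCoarselyLipschitz_rpow (hq : 0 < q) (h : IsTauFunction τ q Γ) :
    IsCoarselyLipschitz fun x ↦ (q / 2 + Γ x) ^ (1 / (2 * τ)) := by
  have hpos (x : E n) : 0 < q / 2 + Γ x := by linarith [h.quarter_le_half_add x]
  obtain ⟨hcont, -, C₁, hC₁, R, -, hlip⟩ := h
  refine .of_continuous_of_lipschitzOnWith_compl (K := C₁⁻¹.toNNReal) (S := ball 0 R)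
    ((continuous_const.add hcont).rpow_const fun x ↦ .inl (hpos x).ne') isBounded_ball
    (LipschitzOnWith.of_dist_le_mul fun x hx y hy ↦ ?_)
  simp only [mem_compl_iff, mem_ball_zero_iff, not_lt] at hx hy
  rw [Real.coe_toNNReal _ (by positivity), le_inv_mul_iff₀ hC₁, Real.dist_eq, dist_eq_norm]
  exact hlip x y hx hy

theorem isSlowlyVarying (hτ : 0 < τ) (hq : 0 < q) (h : IsTauFunction τ q Γ) :
    IsSlowlyVarying (1 / (2 * τ)) fun x ↦ q / 2 + Γ x :=
  (h.isCoarselyLipschitz_rpow hq).isSlowlyVarying (by positivity) (by positivity)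
    h.quarter_le_half_add

end IsTauFunction

theorem statement2_general {m n : ℕ} {κ γ q : ℝ} (hκ : 0 < κ) (hγ : 0 < γ) (hq : 0 < q)
    {A : E n → ℝ} {V : E m → ℝ} (hA : IsTauFunction γ q A) (hV : IsTauFunction κ q V) :
    ∃ C > (0:ℝ), ∀ (x y : E m) (ξ η : E n),
      ‖x - y‖ ≤ C⁻¹ * (q + V x + A ξ) ^ (1 / (2 * κ)) →
      ‖ξ - η‖ ≤ C⁻¹ * (q + V x + A ξ) ^ (1 / (2 * γ)) →
        q + V x + A ξ ≤ C * (q + V y + A η) := by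
  have hsum (x : E m) (ξ : E n) : q + V x + A ξ = (q / 2 + V x) + (q / 2 + A ξ) := by ring
  have hq₄ : 0 ≤ q / 4 := by positivity
  simp only [hsum, ← dist_eq_norm]
  exact (hV.isSlowlyVarying hκ hq).exists_add_le_mul_add (by positivity) (by positivity)
    (fun x ↦ hq₄.trans (hV.quarter_le_half_add x)) (fun ξ ↦ hq₄.trans (hA.quarter_le_half_add ξ))
    (hA.isSlowlyVarying hγ hq)

/-- closeness of (x,ξ) and (y,η) relative to g implies comparability
of M(x,ξ) = q+V(x)+A(ξ) and M(y,η). -/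
theorem statement2 {n : ℕ} (hn : 1 ≤ n) (κ γ q : ℝ) (hκ : 0 < κ) (hγ : 0 < γ) (hq : 0 < q)
    (A V : E n → ℝ) (hA : IsTauFunction γ q A) (hV : IsTauFunction κ q V)
    (hM : ∀ x ξ : E n, 1 ≤ q + V x + A ξ) :
    ∃ C > (0:ℝ), ∀ x y ξ η : E n,
      ‖x - y‖ ≤ C⁻¹ * (q + V x + A ξ) ^ (1 / (2 * κ)) →
      ‖ξ - η‖ ≤ C⁻¹ * (q + V x + A ξ) ^ (1 / (2 * γ)) →
        q + V x + A ξ ≤ C * (q + V y + A η) :=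
  statement2_general hκ hγ hq hA hV
end
end

section
/- Let A, V, q, M, g, g^σ be as in the context. Then the metric g^{(A,V)} is temperate: there exist a constant C > 0 and an integer J ≥ 1 such that for all X=(x,ξ), Y=(y,η) and all T ∈ ℝⁿ×ℝⁿ, both g_X(T) ≤ C·g_Y(T)·(1+g^σ_Y(X−Y))^J and g_Y(T) ≤ C·g_X(T)·(1+g^σ_Y(X−Y))^J hold. -/
open MeasureTheory RealInnerProductSpace
noncomputable section

/-!
For a `τ`-function `Γ`, the root `(q/2 + Γ)^(1/(2τ))` is Lipschitz at infinity and bounded on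
bounded sets, hence Lipschitz at large scales; being bounded away from zero, it varies at most by a
factor `K (1 + |x - y|)`. Such polynomial control of ratios survives sums and real powers, so it
passes to `M` and to the coefficients `M^(-1/κ)`, `M^(-1/γ)` of the metric. Finally `M ≥ q/2`, so
that `1 + g^σ_Y(X - Y)` dominates a multiple of `1 + |X - Y|`.
-/

/-- A positive function whose ratios grow at most polynomially with the distance, as in Hörmander's
temperate weight functions. The ratio bound is stated without division. -/
structure IsTemperateWeight {α : Type*} [PseudoMetricSpace α] (w : α → ℝ) : Prop where
  pos : ∀ x, 0 < w x
  exists_le : ∃ K > (0 : ℝ), ∃ N : ℕ, ∀ x y, w x ≤ K * w y * (1 + dist x y) ^ N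

section CoarseLipschitz

variable {α β : Type*} [PseudoMetricSpace α] [PseudoMetricSpace β] {f : α → β} {s : Set α}

lemma exists_dist_le_mul_one_add_dist_of_forall_near {t : Set α} {C : NNReal} {r B : ℝ}
    (hf : LipschitzOnWith C f t)
    (hnear : ∀ x, ∃ x' ∈ t, dist x x' ≤ r ∧ dist (f x) (f x') ≤ B) :
    ∃ D, ∀ x y, dist (f x) (f y) ≤ D * (1 + dist x y) := by
  refine ⟨2 * B + C * (1 + 2 * r), fun x y ↦ ?_⟩
  obtain ⟨x', hx't, hxr, hxB⟩ := hnear x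
  obtain ⟨y', hy't, hyr, hyB⟩ := hnear y
  have hr : 0 ≤ r := dist_nonneg.trans hxr
  have hB : 0 ≤ B := dist_nonneg.trans hxB
  have hdist : dist x' y' ≤ dist x y + 2 * r := by
    linarith [dist_triangle4 x' x y y', dist_comm x' x]
  calc dist (f x) (f y)
      ≤ dist (f x) (f x') + dist (f x') (f y') + dist (f y') (f y) := dist_triangle4 ..
    _ ≤ B + C * (dist x y + 2 * r) + B := by
        rw [dist_comm (f y')]
        gcongr
        exact (hf.dist_le_mul _ hx't _ hy't).trans (by gcongr)
    _ ≤ (2 * B + C * (1 + 2 * r)) * (1 + dist x y) := by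
        have : 0 ≤ 2 * B * dist x y + C * (1 + 2 * r * dist x y) := by positivity
        linarith

lemma exists_dist_le_mul_one_add_dist_of_lipschitzOnWith_compl {C : NNReal}
    (hs : Bornology.IsBounded s) (hfs : Bornology.IsBounded (f '' s))
    (hf : LipschitzOnWith C f sᶜ) :
    ∃ D, ∀ x y, dist (f x) (f y) ≤ D * (1 + dist x y) := by
  rcases sᶜ.eq_empty_or_nonempty with hempty | ⟨e, he⟩
  · obtain ⟨B, hB⟩ := Metric.isBounded_image_iff.1 hfs
    have hmem : ∀ x, x ∈ s := Set.eq_univ_iff_forall.1 (Set.compl_empty_iff.1 hempty)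
    refine ⟨B, fun x y ↦ (hB x (hmem x) y (hmem y)).trans ?_⟩
    have hB0 : 0 ≤ B := dist_nonneg.trans (hB x (hmem x) x (hmem x))
    exact le_mul_of_one_le_right hB0 (le_add_of_nonneg_right dist_nonneg)
  · obtain ⟨r, hr⟩ := hs.subset_closedBall e
    obtain ⟨B, hB⟩ := hfs.subset_closedBall (f e)
    refine exists_dist_le_mul_one_add_dist_of_forall_near (r := max r 0) (B := max B 0) hf
      fun x ↦ ?_
    by_cases hx : x ∈ s
    · exact ⟨e, he, (hr hx).trans (le_max_left ..),
        (hB (Set.mem_image_of_mem f hx)).trans (le_max_left ..)⟩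
    · exact ⟨x, hx, by simp, by simp⟩

end CoarseLipschitz

namespace IsTemperateWeight

variable {α β : Type*} [PseudoMetricSpace α] [PseudoMetricSpace β] {v w : α → ℝ}

lemma of_dist_le {m D : ℝ} (hm : 0 < m) (hmw : ∀ x, m ≤ w x)
    (hD : ∀ x y, dist (w x) (w y) ≤ D * (1 + dist x y)) : IsTemperateWeight w := by
  refine ⟨fun x ↦ hm.trans_le (hmw x), 1 + |D| / m, by positivity, 1, fun x y ↦ ?_⟩
  have hwy : 0 ≤ w y := hm.le.trans (hmw y)
  have hDw : |D| ≤ |D| / m * w y := by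
    rw [div_mul_eq_mul_div, le_div_iff₀ hm]
    gcongr
    exact hmw y
  calc w x ≤ w y + D * (1 + dist x y) := by
        linarith [le_abs_self (w x - w y), hD x y, Real.dist_eq (w x) (w y)]
    _ ≤ w y * (1 + dist x y) + |D| / m * w y * (1 + dist x y) := by
        gcongr
        · exact le_mul_of_one_le_right hwy (le_add_of_nonneg_right dist_nonneg)
        · exact (le_abs_self D).trans hDw
    _ = (1 + |D| / m) * w y * (1 + dist x y) ^ 1 := by ring

lemma exists_le_and_le (hv : IsTemperateWeight v) (hw : IsTemperateWeight w) :
    ∃ K > (0 : ℝ), ∃ N : ℕ, ∀ x y,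
      v x ≤ K * v y * (1 + dist x y) ^ N ∧ w x ≤ K * w y * (1 + dist x y) ^ N := by
  obtain ⟨K₁, hK₁, N₁, hN₁⟩ := hv.exists_le
  obtain ⟨K₂, -, N₂, hN₂⟩ := hw.exists_le
  refine ⟨max K₁ K₂, lt_max_of_lt_left hK₁, max N₁ N₂, fun x y ↦ ?_⟩
  have hdist : 1 ≤ 1 + dist x y := le_add_of_nonneg_right dist_nonneg
  have hvy := (hv.pos y).le
  have hwy := (hw.pos y).le
  constructor
  · refine (hN₁ x y).trans ?_
    gcongr
    exacts [le_max_left .., le_max_left ..]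
  · refine (hN₂ x y).trans ?_
    gcongr
    exacts [le_max_right .., le_max_right ..]

lemma add (hv : IsTemperateWeight v) (hw : IsTemperateWeight w) :
    IsTemperateWeight fun x ↦ v x + w x := by
  obtain ⟨K, hK, N, hN⟩ := hv.exists_le_and_le hw
  refine ⟨fun x ↦ add_pos (hv.pos x) (hw.pos x), K, hK, N, fun x y ↦ ?_⟩
  linarith [(hN x y).1, (hN x y).2]

lemma comp_lipschitzWith {f : β → α} {C : NNReal} (hw : IsTemperateWeight w)
    (hf : LipschitzWith C f) : IsTemperateWeight fun x ↦ w (f x) := by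
  obtain ⟨K, hK, N, hN⟩ := hw.exists_le
  refine ⟨fun x ↦ hw.pos (f x), K * (1 + C) ^ N, by positivity, N, fun x y ↦ ?_⟩
  have hwy := (hw.pos (f y)).le
  have hdist : 1 + dist (f x) (f y) ≤ (1 + C) * (1 + dist x y) := by
    linarith [hf.dist_le_mul x y, C.coe_nonneg, dist_nonneg (x := x) (y := y)]
  calc w (f x) ≤ K * w (f y) * (1 + dist (f x) (f y)) ^ N := hN (f x) (f y)
    _ ≤ K * w (f y) * ((1 + C) * (1 + dist x y)) ^ N := by gcongr
    _ = K * (1 + C) ^ N * w (f y) * (1 + dist x y) ^ N := by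
        rw [mul_pow]
        ring

lemma inv (hw : IsTemperateWeight w) : IsTemperateWeight fun x ↦ (w x)⁻¹ := by
  obtain ⟨K, hK, N, hN⟩ := hw.exists_le
  refine ⟨fun x ↦ inv_pos.2 (hw.pos x), K, hK, N, fun x y ↦ ?_⟩
  have hyx := hN y x
  rw [dist_comm] at hyx
  rw [mul_right_comm, ← div_eq_mul_inv, le_div_iff₀ (hw.pos y), inv_mul_le_iff₀ (hw.pos x)]
  linarith

lemma rpow_of_nonneg (hw : IsTemperateWeight w) {s : ℝ} (hs : 0 ≤ s) :
    IsTemperateWeight fun x ↦ w x ^ s := by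
  obtain ⟨K, hK, N, hN⟩ := hw.exists_le
  refine ⟨fun x ↦ Real.rpow_pos_of_pos (hw.pos x) s, K ^ s, Real.rpow_pos_of_pos hK s, ⌈N * s⌉₊,
    fun x y ↦ ?_⟩
  have hwy := (hw.pos y).le
  have hdist : 1 ≤ 1 + dist x y := le_add_of_nonneg_right dist_nonneg
  calc w x ^ s ≤ (K * w y * (1 + dist x y) ^ N) ^ s :=
        Real.rpow_le_rpow (hw.pos x).le (hN x y) hs
    _ = K ^ s * w y ^ s * (1 + dist x y) ^ (N * s) := by
        rw [Real.mul_rpow (by positivity) (by positivity), Real.mul_rpow hK.le hwy,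
          ← Real.rpow_natCast_mul (by positivity)]
    _ ≤ K ^ s * w y ^ s * (1 + dist x y) ^ ⌈N * s⌉₊ := by
        rw [← Real.rpow_natCast (1 + dist x y) ⌈N * s⌉₊]
        gcongr
        exact Nat.le_ceil _

lemma rpow (hw : IsTemperateWeight w) (s : ℝ) : IsTemperateWeight fun x ↦ w x ^ s := by
  rcases le_total 0 s with hs | hs
  · exact hw.rpow_of_nonneg hs
  · simpa only [Real.rpow_neg (hw.pos _).le, inv_inv] using
      (hw.rpow_of_nonneg (neg_nonneg.2 hs)).inv

end IsTemperateWeight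

namespace IsTauFunction

variable {n : ℕ} {τ q : ℝ} {Γ : E n → ℝ}

lemma quarter_lt (hΓ : IsTauFunction τ q Γ) (x : E n) : q / 4 < q / 2 + Γ x := by
  linarith [hΓ.2.1 x]

lemma exists_dist_rpow_le (hΓ : IsTauFunction τ q Γ) (hτ : 0 < τ) :
    ∃ D, ∀ x y, dist ((q / 2 + Γ x) ^ (1 / (2 * τ))) ((q / 2 + Γ y) ^ (1 / (2 * τ))) ≤
      D * (1 + dist x y) := by
  obtain ⟨hcont, -, C₁, hC₁, R, -, hlip⟩ := hΓ
  have hroot : Continuous fun x ↦ (q / 2 + Γ x) ^ (1 / (2 * τ)) :=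
    (continuous_const.add hcont).rpow_const fun _ ↦ .inr (by positivity)
  refine exists_dist_le_mul_one_add_dist_of_lipschitzOnWith_compl
    (s := Metric.ball 0 R) (C := C₁⁻¹.toNNReal) Metric.isBounded_ball ?_ ?_
  · exact ((isCompact_closedBall 0 R).image hroot).isBounded.subset
      (Set.image_mono Metric.ball_subset_closedBall)
  · refine LipschitzOnWith.of_dist_le_mul fun x hx y hy ↦ ?_
    rw [Real.coe_toNNReal _ (inv_nonneg.2 hC₁.le), le_inv_mul_iff₀ hC₁, Real.dist_eq, dist_eq_norm]
    exact hlip x y (by simpa using hx) (by simpa using hy)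

lemma isTemperateWeight (hΓ : IsTauFunction τ q Γ) (hτ : 0 < τ) (hq : 0 < q) :
    IsTemperateWeight fun x ↦ q / 2 + Γ x := by
  obtain ⟨D, hD⟩ := hΓ.exists_dist_rpow_le hτ
  have hroot : IsTemperateWeight fun x ↦ (q / 2 + Γ x) ^ (1 / (2 * τ)) :=
    .of_dist_le (m := (q / 4) ^ (1 / (2 * τ))) (by positivity)
      (fun x ↦ Real.rpow_le_rpow (by positivity) (hΓ.quarter_lt x).le (by positivity)) hD
  have hpos (x : E n) : 0 ≤ q / 2 + Γ x := by linarith [hΓ.quarter_lt x]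
  simpa only [one_div, Real.rpow_inv_rpow (hpos _) (mul_pos two_pos hτ).ne']
    using hroot.rpow (2 * τ)

end IsTauFunction

lemma one_add_le_mul_one_add_sq_mul {m a t : ℝ} (hm : 0 < m) (hma : m ≤ a) :
    1 + t ≤ (2 + m⁻¹) * (1 + t ^ 2 * a) := by
  have ha : 0 < a := hm.trans_le hma
  have hsq : t ^ 2 ≤ m⁻¹ * (t ^ 2 * a) := by
    rw [le_inv_mul_iff₀ hm, mul_comm]
    gcongr
  have hrest : 0 ≤ m⁻¹ + 2 * (t ^ 2 * a) := by positivity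
  linarith [sq_nonneg (t - 1), sq_nonneg t]

section Metric

variable {n : ℕ} {κ γ q : ℝ} {A V : E n → ℝ}

lemma half_le_of_isTauFunction (hA : IsTauFunction γ q A) (hV : IsTauFunction κ q V)
    (X : E n × E n) : q / 2 ≤ q + V X.1 + A X.2 := by
  linarith [hA.quarter_lt X.2, hV.quarter_lt X.1]

lemma isTemperateWeight_of_isTauFunction (hκ : 0 < κ) (hγ : 0 < γ) (hq : 0 < q)
    (hA : IsTauFunction γ q A) (hV : IsTauFunction κ q V) :
    IsTemperateWeight fun X : E n × E n ↦ q + V X.1 + A X.2 := by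
  have hsplit (X : E n × E n) : q / 2 + V X.1 + (q / 2 + A X.2) = q + V X.1 + A X.2 := by ring
  have hfst : LipschitzWith 1 (Prod.fst : E n × E n → E n) := LipschitzWith.prod_fst
  have hsnd : LipschitzWith 1 (Prod.snd : E n × E n → E n) := LipschitzWith.prod_snd
  simpa only [hsplit] using ((hV.isTemperateWeight hκ hq).comp_lipschitzWith hfst).add
    ((hA.isTemperateWeight hγ hq).comp_lipschitzWith hsnd)

lemma exists_gMet_le (hM : IsTemperateWeight fun X : E n × E n ↦ q + V X.1 + A X.2) (κ γ : ℝ) :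
    ∃ K > (0 : ℝ), ∃ N : ℕ, ∀ X Y T : E n × E n,
      gMet κ γ q A V X T ≤ K * gMet κ γ q A V Y T * (1 + dist X Y) ^ N := by
  obtain ⟨K, hK, N, hN⟩ := (hM.rpow (-(1 / κ))).exists_le_and_le (hM.rpow (-(1 / γ)))
  refine ⟨K, hK, N, fun X Y T ↦ ?_⟩
  have hfst := mul_le_mul_of_nonneg_left (hN X Y).1 (sq_nonneg ‖T.1‖)
  have hsnd := mul_le_mul_of_nonneg_left (hN X Y).2 (sq_nonneg ‖T.2‖)
  unfold gMet
  linarith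

lemma gMet_nonneg {X : E n × E n} (hX : 0 ≤ q + V X.1 + A X.2) (T : E n × E n) :
    0 ≤ gMet κ γ q A V X T := by
  unfold gMet
  positivity

lemma gSig_nonneg {X : E n × E n} (hX : 0 ≤ q + V X.1 + A X.2) (T : E n × E n) :
    0 ≤ gSig κ γ q A V X T := by
  unfold gSig
  positivity

lemma exists_one_add_dist_le_mul_one_add_gSig {c : ℝ} (hκ : 0 < κ) (hγ : 0 < γ) (hc : 0 < c)
    (hM : ∀ X : E n × E n, c ≤ q + V X.1 + A X.2) :
    ∃ C > (0 : ℝ), ∀ X Y : E n × E n, 1 + dist X Y ≤ C * (1 + gSig κ γ q A V Y (X - Y)) := by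
  set m := min (c ^ (1 / γ)) (c ^ (1 / κ))
  have hm : 0 < m := by positivity
  refine ⟨2 + m⁻¹, by positivity, fun X Y ↦ ?_⟩
  have hMY : 0 < q + V Y.1 + A Y.2 := hc.trans_le (hM Y)
  have hmγ : m ≤ (q + V Y.1 + A Y.2) ^ (1 / γ) :=
    (min_le_left ..).trans (Real.rpow_le_rpow hc.le (hM Y) (by positivity))
  have hmκ : m ≤ (q + V Y.1 + A Y.2) ^ (1 / κ) :=
    (min_le_right ..).trans (Real.rpow_le_rpow hc.le (hM Y) (by positivity))
  rw [Prod.dist_eq, dist_eq_norm, dist_eq_norm, ← max_add_add_left]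
  refine max_le ((one_add_le_mul_one_add_sq_mul hm hmγ).trans ?_)
    ((one_add_le_mul_one_add_sq_mul hm hmκ).trans ?_) <;> unfold gSig <;> gcongr
  · exact le_add_of_nonneg_right (by positivity)
  · exact le_add_of_nonneg_left (by positivity)

end Metric

theorem statement3_general {n : ℕ} (κ γ q : ℝ) (hκ : 0 < κ) (hγ : 0 < γ) (hq : 0 < q)
    (A V : E n → ℝ) (hA : IsTauFunction γ q A) (hV : IsTauFunction κ q V) :
    ∃ C > (0:ℝ), ∃ J : ℕ, 1 ≤ J ∧ ∀ X Y T : E n × E n,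
      gMet κ γ q A V X T ≤
          C * gMet κ γ q A V Y T * (1 + gSig κ γ q A V Y (X - Y)) ^ J ∧
      gMet κ γ q A V Y T ≤
          C * gMet κ γ q A V X T * (1 + gSig κ γ q A V Y (X - Y)) ^ J := by
  have hM := isTemperateWeight_of_isTauFunction hκ hγ hq hA hV
  obtain ⟨K, hK, N, hmet⟩ := exists_gMet_le hM κ γ
  obtain ⟨C, hC, hsig⟩ := exists_one_add_dist_le_mul_one_add_gSig hκ hγ (half_pos hq)
    (half_le_of_isTauFunction hA hV)
  have hbound (X Y Z T : E n × E n) : K * gMet κ γ q A V Z T * (1 + dist X Y) ^ N ≤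
      K * C ^ N * gMet κ γ q A V Z T * (1 + gSig κ γ q A V Y (X - Y)) ^ (N + 1) := by
    have hgMet : 0 ≤ gMet κ γ q A V Z T := gMet_nonneg (hM.pos Z).le T
    have hgSig : 0 ≤ gSig κ γ q A V Y (X - Y) := gSig_nonneg (hM.pos Y).le _
    calc K * gMet κ γ q A V Z T * (1 + dist X Y) ^ N
        ≤ K * gMet κ γ q A V Z T * (C * (1 + gSig κ γ q A V Y (X - Y))) ^ N := by
          gcongr
          exact hsig X Y
      _ = K * C ^ N * gMet κ γ q A V Z T * (1 + gSig κ γ q A V Y (X - Y)) ^ N := by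
          rw [mul_pow]
          ring
      _ ≤ K * C ^ N * gMet κ γ q A V Z T * (1 + gSig κ γ q A V Y (X - Y)) ^ (N + 1) := by
          gcongr
          exacts [le_add_of_nonneg_right hgSig, N.le_succ]
  exact ⟨K * C ^ N, by positivity, N + 1, N.succ_pos, fun X Y T ↦
    ⟨(hmet X Y T).trans (hbound X Y Y T),
      (hmet Y X T).trans (dist_comm X Y ▸ hbound X Y X T)⟩⟩

/-- the metric g^{(A,V)} is temperate. -/
theorem statement3 {n : ℕ} (hn : 1 ≤ n) (κ γ q : ℝ) (hκ : 0 < κ) (hγ : 0 < γ) (hq : 0 < q)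
    (A V : E n → ℝ) (hA : IsTauFunction γ q A) (hV : IsTauFunction κ q V)
    (hM : ∀ x ξ : E n, 1 ≤ q + V x + A ξ) :
    ∃ C > (0:ℝ), ∃ J : ℕ, 1 ≤ J ∧ ∀ X Y T : E n × E n,
      gMet κ γ q A V X T ≤
          C * gMet κ γ q A V Y T * (1 + gSig κ γ q A V Y (X - Y)) ^ J ∧
      gMet κ γ q A V Y T ≤
          C * gMet κ γ q A V X T * (1 + gSig κ γ q A V Y (X - Y)) ^ J :=
  statement3_general κ γ q hκ hγ hq A V hA hV
end
end
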